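/- For general lines L_1,…,L_7 in P^3 (i.e., there exists a nonzero polynomial P in the 56 coordinates of spanning vectors a_1,b_1,…,a_7,b_7 ∈ ℂ^4 such that whenever P does not vanish, each pair a_i,b_i is linearly independent, the subspaces L_i = span{a_i,b_i} pairwise intersect only in 0, and the following holds): the ℂ-vector space of homogeneous polynomials F of degree 12 in ℂ[x_0,x_1,x_2,x_3] with F ∈ I(L_i)^3 for i = 1,…,6 and F ∈ I(L_7)^2 has dimension exactly 1. Since binom(15,3) = 455 < 457 = 6·70 + 37, the system 𝓛_{12}(3,3,3,3,3,3,2) has negative virtual dimension, so it is special (unexpected). -/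

import Mathlib

open MvPolynomial

noncomputable section

abbrev C4 : Type := Fin 4 → ℂ
abbrev R3 : Type := MvPolynomial (Fin 4) ℂ

/-- The homogeneous ideal of the line in `P^3` corresponding to a linear subspace
`L ⊆ ℂ^4`: all polynomials vanishing identically on `L`. -/
def lineIdeal (L : Submodule ℂ C4) : Ideal R3 where
  carrier := {F | ∀ v ∈ L, eval v F = 0}
  add_mem' := by
    intro a b ha hb v hv
    simp [ha v hv, hb v hv]
  zero_mem' := by
    intro v hv
    simp
  smul_mem' := by
    intro c F hF v hv
    simp [smul_eq_mul, hF v hv]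

/-- The linear system `𝓛_d(m_1, …, m_s)`: homogeneous forms of degree `d`
vanishing to order `m i` along the line `L i`, as a `ℂ`-subspace. -/
def linSys (d : ℕ) {s : ℕ} (L : Fin s → Submodule ℂ C4) (m : Fin s → ℕ) :
    Submodule ℂ R3 :=
  homogeneousSubmodule (Fin 4) ℂ d ⊓
    ⨅ i, Submodule.restrictScalars ℂ ((lineIdeal (L i)) ^ (m i))

/-- A property `Q` holds for `s` *general* lines in `P^3`: there is a nonzero
polynomial `P` in the `8s` coordinates of spanning vectors such that whenever
`P` does not vanish, each pair of vectors is linearly independent, the spanned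
planes are pairwise disjoint, and `Q` holds for these lines. -/
def GeneralLines (s : ℕ) (Q : (Fin s → Submodule ℂ C4) → Prop) : Prop :=
  ∃ P : MvPolynomial (Fin s × Fin 2 × Fin 4) ℂ, P ≠ 0 ∧
    ∀ v : Fin s → Fin 2 → C4,
      MvPolynomial.eval (fun p => v p.1 p.2.1 p.2.2) P ≠ 0 →
      (∀ i, LinearIndependent ℂ ![v i 0, v i 1]) ∧
      (∀ i j, i ≠ j →
        Submodule.span ℂ {v i 0, v i 1} ⊓ Submodule.span ℂ {v j 0, v j 1} = ⊥) ∧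
      Q (fun i => Submodule.span ℂ {v i 0, v i 1})

/-! ### A kernel-friendly Gaussian elimination over `ZMod p`

Rows of a matrix are packed into natural numbers, one slot per column, base `B`. -/

/-- Evaluate the number `n` before passing it to `k`. -/
def force {α : Type} (n : ℕ) (k : ℕ → α) : α :=
  Nat.rec (k 0) (fun m _ => k (Nat.succ m)) n

/-- Evaluate a list before passing it to `k`. -/
def kforceL {α : Type} (l : List ℕ) : (List ℕ → α) → α :=
  List.rec (motive := fun _ => (List ℕ → α) → α) (fun k => k [])
    (fun v _ ih k => force v fun v => ih (fun l => k (v :: l))) l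

/-- The value at `x` of the derivative of order `a` of the `n`-th power, modulo `p`. -/
def kf (p x a n : ℕ) : ℕ :=
  Nat.mod (Nat.mul (Nat.descFactorial n a) (Nat.pow x (Nat.sub n a))) p

/-- Packed concatenation of the lists in `T`, scaled by the entries of `f`. -/
def kconv (B : ℕ) (T : List (ℕ × ℕ)) : List ℕ → ℕ :=
  List.rec (motive := fun _ => List ℕ → ℕ) (fun _ => 0)
    (fun x _ ih f => List.rec (motive := fun _ => ℕ) 0
      (fun a f _ => Nat.add (Nat.mul a x.1) (Nat.mul (Nat.pow B x.2) (ih f))) f) T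

/-- Add one more variable to a table of packed rows. -/
def ktab {α : Type} (B : ℕ) (f : List ℕ) (T : List (ℕ × ℕ)) : (List (ℕ × ℕ) → ℕ → α) → α :=
  List.rec (motive := fun _ => (List (ℕ × ℕ) → ℕ → α) → α) (fun k => k [] 0)
    (fun x T ih k => ih fun l len => force (kconv B (x :: T) f) fun v =>
      force (Nat.add x.2 len) fun len' => k ((v, len') :: l) len') T

/-- The table of packed rows in one variable. -/
def ktab0 {α : Type} (f : List ℕ) : (List (ℕ × ℕ) → α) → α :=
  List.rec (motive := fun _ => (List (ℕ × ℕ) → α) → α) (fun k => k [])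
    (fun v _ ih k => ih fun l => k ((v, 1) :: l)) f

/-- A packed row. -/
def krow (p B d x0 x1 x2 x3 a0 a1 a2 a3 : ℕ) : ℕ :=
  kforceL ((List.range (Nat.succ d)).map (kf p x0 a0)) fun f0 =>
  kforceL ((List.range (Nat.succ d)).map (kf p x1 a1)) fun f1 =>
  kforceL ((List.range (Nat.succ d)).map (kf p x2 a2)) fun f2 =>
  kforceL ((List.range (Nat.succ d)).map (kf p x3 a3)).reverse fun f3 =>
  ktab0 f3 fun T3 => ktab B f2 T3 fun T2 _ => ktab B f1 T2 fun T1 _ => kconv B T1 f0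

/-- Multiply a packed row by `v` and reduce every slot modulo `p`. -/
def knorm (p B v : ℕ) (n : ℕ) : ℕ → ℕ :=
  Nat.rec (motive := fun _ => ℕ → ℕ) (fun _ => 0)
    (fun _ ih N => force N fun N =>
      Nat.add (Nat.mod (Nat.mul (Nat.mod N B) v) p) (Nat.mul B (ih (Nat.div N B)))) n

/-- Clear the lowest slot of every row with the pivot row `u` and drop it. -/
def kstep (p B u : ℕ) (rs : List ℕ) : List ℕ → List ℕ :=
  List.rec (motive := fun _ => List ℕ → List ℕ) (fun acc => acc)
    (fun r _ ih acc =>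
      force (Nat.div (Nat.add r (Nat.mul (Nat.sub p (Nat.mod (Nat.mod r B) p)) u)) B)
        (fun r2 => ih (r2 :: acc))) rs

/-- Gaussian elimination on packed rows. -/
def kelim (p B : ℕ) (n : ℕ) : List ℕ → Bool :=
  Nat.rec (motive := fun _ => List ℕ → Bool) (fun _ => true)
    (fun n ih rows => List.rec (motive := fun _ => Bool) false
      (fun r rs _ => force (Nat.mod (Nat.pow (Nat.mod (Nat.mod r B) p) (Nat.sub p 2)) p) fun v =>
        force (knorm p B v (Nat.succ n) r) fun u =>
          Bool.rec (motive := fun _ => Bool) false (ih (kstep p B u rs []))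
            (Nat.beq (Nat.mod u B) 1)) rows) n

/-- A condition: the number of the line, the parameter of the point on it, and the order of
differentiation in the four variables. -/
abbrev Spec : Type := Fin 7 × ℕ × ℕ × ℕ × ℕ × ℕ

/-- Build the rows. -/
def krows (p B d : ℕ) (V : Fin 7 → Fin 2 → Fin 4 → ℕ) (S : List Spec) : List ℕ → List ℕ :=
  List.rec (motive := fun _ => List ℕ → List ℕ) (fun acc => acc)
    (fun s _ ih acc =>
      force (Nat.add (V s.1 0 0) (Nat.mul s.2.1 (V s.1 1 0))) fun x0 =>
      force (Nat.add (V s.1 0 1) (Nat.mul s.2.1 (V s.1 1 1))) fun x1 =>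
      force (Nat.add (V s.1 0 2) (Nat.mul s.2.1 (V s.1 1 2))) fun x2 =>
      force (Nat.add (V s.1 0 3) (Nat.mul s.2.1 (V s.1 1 3))) fun x3 =>
      force (krow p B d x0 x1 x2 x3 s.2.2.1 s.2.2.2.1 s.2.2.2.2.1 s.2.2.2.2.2)
        fun r => ih (r :: acc)) S

/-- The complete check. -/
def kcheck (p B d N : ℕ) (V : Fin 7 → Fin 2 → Fin 4 → ℕ) (S : List Spec) : Bool :=
  kelim p B N (krows p B d V S [])

/-- A sufficiently general configuration of seven lines. -/
def kV : Fin 7 → Fin 2 → Fin 4 → ℕ :=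
  ![![![1,0,0,0], ![0,1,0,0]], ![![0,0,1,0], ![0,0,0,1]], ![![1,0,1,0], ![0,1,0,1]],
    ![![1,0,2,0], ![0,1,0,3]], ![![1,0,2,1], ![0,1,3,6]], ![![1,0,4,2], ![0,1,4,1]],
    ![![1,0,1,4], ![0,1,1,5]]]

def kS4 : List Spec :=
  [(1,2,0,0,0,0), (1,4,0,0,0,0), (2,1,0,0,0,0), (2,3,0,0,0,0), (3,1,0,0,0,0), (3,3,0,0,0,0),
  (4,2,0,0,0,0), (4,0,0,0,0,0), (3,4,0,0,0,0), (5,1,0,0,0,0), (5,2,0,0,0,0), (5,4,0,0,0,0),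
  (5,0,0,0,0,0), (3,0,0,0,0,0), (6,2,0,0,0,0), (6,3,0,0,0,0), (0,4,0,0,0,0), (0,0,0,0,0,0),
  (6,4,0,0,0,0), (0,3,0,0,0,0), (6,1,0,0,0,0), (6,0,0,0,0,0), (0,2,0,0,0,0), (5,3,0,0,0,0),
  (4,4,0,0,0,0), (2,0,0,0,0,0), (4,3,0,0,0,0), (0,1,0,0,0,0), (4,1,0,0,0,0), (3,2,0,0,0,0),
  (2,4,0,0,0,0), (2,2,0,0,0,0), (1,0,0,0,0,0), (1,3,0,0,0,0), (1,1,0,0,0,0)]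

def kS5 : List Spec :=
  [(1,2,0,0,0,0), (1,4,0,0,0,0), (2,1,0,0,0,0), (2,3,0,0,0,0), (3,1,0,0,0,0), (3,3,0,0,0,0),
  (4,2,0,0,0,0), (4,0,0,0,0,0), (3,4,0,0,0,0), (5,1,0,0,0,0), (5,2,0,0,0,0), (5,4,0,0,0,0),
  (5,0,0,0,0,0), (3,0,0,0,0,0), (6,0,0,0,1,0), (6,1,0,0,0,0), (0,4,0,0,0,0), (0,0,0,0,0,0),
  (6,0,0,0,0,1), (0,3,0,0,0,0), (6,0,0,1,0,0), (6,0,1,0,0,0), (0,2,0,0,0,0), (5,3,0,0,0,0),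
  (4,4,0,0,0,0), (2,0,0,0,0,0), (4,3,0,0,0,0), (0,1,0,0,0,0), (4,1,0,0,0,0), (3,2,0,0,0,0),
  (2,4,0,0,0,0), (2,2,0,0,0,0), (1,0,0,0,0,0), (1,3,0,0,0,0), (1,1,0,0,0,0)]

def kS12 : List Spec :=
  [(1,2,0,0,0,0), (1,4,0,0,0,0), (1,6,0,0,0,0), (1,8,0,0,0,0), (1,10,0,0,0,0), (1,12,0,0,0,0),
  (1,1,0,1,0,0), (1,3,0,1,0,0), (1,5,0,1,0,0), (1,7,0,1,0,0), (1,9,0,1,0,0), (1,11,0,1,0,0),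
  (1,1,0,2,0,0), (1,3,0,2,0,0), (1,5,0,2,0,0), (1,7,0,2,0,0), (1,9,0,2,0,0), (1,0,0,2,0,0),
  (2,2,0,0,0,0), (2,4,0,0,0,0), (2,6,0,0,0,0), (2,8,0,0,0,0), (2,10,0,0,0,0), (2,2,0,0,0,1),
  (2,4,0,0,0,1), (2,6,0,0,0,1), (2,8,0,0,0,1), (2,1,0,0,0,2), (2,3,0,0,0,2), (2,5,0,0,0,2),
  (2,7,0,0,0,2), (3,1,0,0,0,0), (3,3,0,0,0,0), (3,5,0,0,0,0), (3,7,0,0,0,0), (3,2,0,0,0,1),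
  (3,4,0,0,0,1), (3,6,0,0,0,1), (3,2,0,0,0,2), (3,4,0,0,0,2), (4,1,0,0,0,0), (4,3,0,0,0,0),
  (0,1,0,0,0,2), (0,1,0,0,2,0), (0,1,0,0,1,0), (1,1,1,0,0,0), (1,3,1,0,0,0), (1,5,1,0,0,0),
  (1,7,1,0,0,0), (1,9,1,0,0,0), (1,11,1,0,0,0), (1,1,1,1,0,0), (1,3,1,1,0,0), (1,5,1,1,0,0),
  (1,7,1,1,0,0), (1,9,1,1,0,0), (1,0,1,1,0,0), (2,2,0,0,1,0), (2,4,0,0,1,0), (2,6,0,0,1,0),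
  (2,8,0,0,1,0), (2,11,0,0,0,0), (2,2,0,0,1,1), (2,4,0,0,1,1), (2,6,0,0,1,1), (2,8,0,0,1,1),
  (3,1,0,0,1,0), (3,3,0,0,1,0), (3,5,0,0,1,0), (3,8,0,0,0,0), (3,1,0,0,1,1), (3,3,0,0,1,1),
  (3,5,0,0,1,1), (3,7,0,0,1,0), (4,6,0,0,0,0), (4,1,0,0,1,0), (3,6,0,0,1,1), (4,2,0,0,1,0),
  (4,2,0,0,0,1), (4,4,0,0,1,0), (4,6,0,0,1,0), (0,2,0,0,0,2), (0,2,0,0,2,0), (0,2,0,0,1,0),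
  (1,1,2,0,0,0), (1,3,2,0,0,0), (1,5,2,0,0,0), (1,7,2,0,0,0), (1,9,2,0,0,0), (1,0,2,0,0,0),
  (2,2,0,0,2,0), (2,4,0,0,2,0), (2,6,0,0,2,0), (2,8,0,0,2,0), (2,12,0,0,0,0), (3,2,0,0,2,0),
  (3,4,0,0,2,0), (3,8,0,0,0,1), (2,9,0,0,1,1), (4,8,0,0,0,0), (4,11,0,0,0,0), (3,7,0,0,0,2),
  (3,8,0,0,1,0), (4,7,0,0,1,0), (4,10,0,0,1,0), (4,6,0,0,0,1), (3,7,0,0,2,0), (4,2,0,0,2,0),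
  (4,3,0,0,2,0), (4,2,0,0,0,2), (4,4,0,0,2,0), (4,4,0,0,1,1), (4,6,0,0,2,0), (4,8,0,0,2,0),
  (0,3,0,0,0,2), (0,3,0,0,2,0), (0,3,0,0,1,0), (4,0,0,0,0,0), (4,12,0,0,0,0), (3,8,0,0,0,2),
  (3,10,0,0,0,0), (2,0,0,0,0,1), (4,7,0,0,0,1), (4,11,0,0,1,0), (4,10,0,0,0,1), (3,9,0,0,1,0),
  (2,11,0,0,1,0), (4,9,0,0,2,0), (4,7,0,0,1,1), (4,4,0,0,0,2), (2,10,0,0,1,1), (4,10,0,0,2,0),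
  (4,8,0,0,1,1), (4,5,0,0,0,2), (5,6,0,0,0,0), (5,8,0,0,0,0), (5,10,0,0,0,0), (5,2,0,0,1,0),
  (5,3,0,0,1,0), (5,4,0,0,1,0), (5,5,0,0,1,0), (5,6,0,0,1,0), (0,4,0,0,1,1), (0,4,0,0,0,1),
  (0,4,0,0,0,0), (4,9,0,0,0,1), (4,0,0,0,1,1), (3,10,0,0,0,1), (2,0,0,0,1,1), (4,6,0,0,0,2),
  (4,10,0,0,1,1), (4,8,0,0,0,2), (3,10,0,0,1,0), (5,11,0,0,0,0), (5,6,0,0,0,1), (5,7,0,0,0,1),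
  (3,0,0,0,0,2), (5,9,0,0,1,0), (5,10,0,0,1,0), (5,0,0,0,2,0), (5,1,0,0,1,1), (5,2,0,0,1,1),
  (5,3,0,0,2,0), (5,3,0,0,0,2), (0,5,0,0,0,2), (0,5,0,0,2,0), (0,5,0,0,1,0), (4,0,0,0,0,2),
  (4,10,0,0,0,2), (3,10,0,0,0,2), (3,12,0,0,0,0), (5,0,0,0,1,0), (5,1,0,0,0,2), (5,4,0,0,0,2),
  (3,0,0,0,0,1), (5,5,0,0,1,1), (5,6,0,0,2,0), (5,6,0,0,0,2), (5,7,0,0,1,1), (5,8,0,0,2,0),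
  (5,8,0,0,0,2), (5,9,0,0,1,1), (0,6,0,0,0,2), (0,6,0,0,2,0), (0,6,0,0,1,0), (5,0,0,0,0,0),
  (5,10,0,0,2,0), (3,10,0,0,1,1), (3,0,0,0,0,0), (5,10,0,0,1,1), (6,2,0,0,0,0), (3,0,0,0,1,1),
  (6,6,0,0,0,0), (6,7,0,0,0,0), (6,9,0,0,0,0), (6,11,0,0,0,0), (0,7,0,0,0,2), (0,7,0,0,2,0),
  (0,7,0,0,1,0), (5,0,0,0,0,1), (6,0,0,0,1,0), (3,10,0,0,2,0), (6,1,0,0,1,0), (6,2,0,0,1,0),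
  (6,3,0,0,1,0), (6,4,0,0,1,0), (6,5,0,0,1,0), (0,8,0,0,1,1), (0,8,0,0,0,1), (0,8,0,0,0,0),
  (6,5,0,0,0,1), (6,6,0,0,0,1), (6,7,0,0,1,0), (6,7,0,0,0,1), (0,9,0,0,0,2), (0,9,0,0,2,0),
  (0,9,0,0,1,0), (6,9,0,0,1,0), (6,10,0,0,1,0), (0,10,0,0,0,2), (0,10,0,0,2,0), (0,10,0,0,1,0),
  (0,0,0,0,0,2), (0,0,0,0,2,0), (0,11,0,0,1,0), (0,0,0,0,0,1), (0,12,0,0,0,0), (0,0,0,0,0,0),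
  (0,0,0,0,1,0), (0,11,0,0,0,0), (0,11,0,0,0,1), (0,0,0,0,1,1), (0,10,0,0,0,0), (0,10,0,0,0,1),
  (0,10,0,0,1,1), (6,0,0,0,2,0), (6,9,0,0,0,1), (0,9,0,0,0,0), (0,9,0,0,0,1), (0,9,0,0,1,1),
  (6,8,0,0,0,1), (6,8,0,0,1,0), (3,0,0,0,2,0), (6,6,0,0,1,0), (5,0,0,0,0,2), (0,8,0,0,1,0),
  (0,8,0,0,2,0), (0,8,0,0,0,2), (6,4,0,0,0,1), (6,3,0,0,0,1), (6,2,0,0,0,1), (6,1,0,0,0,1),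
  (3,0,0,0,1,0), (6,0,0,0,0,1), (5,10,0,0,0,2), (0,7,0,0,0,0), (0,7,0,0,0,1), (0,7,0,0,1,1),
  (6,12,0,0,0,0), (6,10,0,0,0,0), (6,8,0,0,0,0), (6,5,0,0,0,0), (6,4,0,0,0,0), (6,3,0,0,0,0),
  (6,1,0,0,0,0), (5,0,0,0,1,1), (3,11,0,0,1,0), (6,0,0,0,0,0), (5,11,0,0,0,1), (0,6,0,0,0,0),
  (0,6,0,0,0,1), (0,6,0,0,1,1), (5,9,0,0,0,2), (5,9,0,0,2,0), (5,8,0,0,1,1), (5,7,0,0,0,2),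
  (5,7,0,0,2,0), (5,6,0,0,1,1), (5,5,0,0,0,2), (5,5,0,0,2,0), (3,9,0,0,2,0), (5,4,0,0,2,0),
  (5,11,0,0,1,0), (2,0,0,0,2,0), (3,11,0,0,0,1), (5,12,0,0,0,0), (4,9,0,0,0,2), (0,5,0,0,0,0),
  (0,5,0,0,0,1), (0,5,0,0,1,1), (5,4,0,0,1,1), (5,3,0,0,1,1), (5,2,0,0,0,2), (5,2,0,0,2,0),
  (5,1,0,0,2,0), (5,10,0,0,0,1), (5,9,0,0,0,1), (5,8,0,0,0,1), (5,8,0,0,1,0), (5,7,0,0,1,0),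
  (5,1,0,0,0,1), (2,10,0,0,2,0), (3,9,0,0,1,1), (4,7,0,0,0,2), (4,9,0,0,1,1), (2,0,0,0,1,0),
  (3,11,0,0,0,0), (3,9,0,0,0,2), (4,11,0,0,0,1), (4,0,0,0,0,1), (0,4,0,0,1,0), (0,4,0,0,2,0),
  (0,4,0,0,0,2), (5,5,0,0,0,1), (5,4,0,0,0,1), (5,3,0,0,0,1), (5,2,0,0,0,1), (5,1,0,0,1,0),
  (5,9,0,0,0,0), (5,7,0,0,0,0), (5,5,0,0,0,0), (5,4,0,0,0,0), (5,3,0,0,0,0), (5,1,0,0,0,0),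
  (3,8,0,0,2,0), (4,3,0,0,0,2), (4,6,0,0,1,1), (4,0,0,0,2,0), (2,9,0,0,2,0), (3,8,0,0,1,1),
  (4,8,0,0,0,1), (4,9,0,0,1,0), (2,0,0,0,0,0), (2,0,0,0,0,2), (3,9,0,0,0,1), (4,0,0,0,1,0),
  (4,9,0,0,0,0), (0,3,0,0,0,0), (0,3,0,0,0,1), (0,3,0,0,1,1), (5,2,0,0,0,0), (4,7,0,0,2,0),
  (4,5,0,0,1,1), (4,5,0,0,2,0), (4,3,0,0,1,1), (4,1,0,0,0,2), (4,2,0,0,1,1), (4,1,0,0,1,1),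
  (3,7,0,0,1,1), (4,5,0,0,0,1), (4,8,0,0,1,0), (2,10,0,0,0,2), (3,6,0,0,2,0), (4,4,0,0,0,1),
  (4,10,0,0,0,0), (2,11,0,0,0,1), (3,9,0,0,0,0), (3,5,0,0,2,0), (3,3,0,0,2,0), (3,1,0,0,2,0),
  (2,10,0,0,1,0), (2,7,0,0,2,0), (2,5,0,0,2,0), (2,3,0,0,2,0), (2,1,0,0,2,0), (1,10,2,0,0,0),
  (1,8,2,0,0,0), (1,6,2,0,0,0), (1,4,2,0,0,0), (1,2,2,0,0,0), (0,2,0,0,0,0), (0,2,0,0,0,1),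
  (0,2,0,0,1,1), (4,1,0,0,2,0), (4,5,0,0,1,0), (4,3,0,0,0,1), (4,3,0,0,1,0), (4,1,0,0,0,1),
  (3,6,0,0,0,2), (4,7,0,0,0,0), (4,5,0,0,0,0), (3,7,0,0,0,1), (3,4,0,0,1,1), (3,2,0,0,1,1),
  (2,9,0,0,0,2), (3,6,0,0,1,0), (3,4,0,0,1,0), (3,2,0,0,1,0), (2,10,0,0,0,1), (2,7,0,0,1,1),
  (2,5,0,0,1,1), (2,3,0,0,1,1), (2,1,0,0,1,1), (2,9,0,0,1,0), (2,7,0,0,1,0), (2,5,0,0,1,0),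
  (2,3,0,0,1,0), (2,1,0,0,1,0), (1,10,1,1,0,0), (1,8,1,1,0,0), (1,6,1,1,0,0), (1,4,1,1,0,0),
  (1,2,1,1,0,0), (1,0,1,0,0,0), (1,10,1,0,0,0), (1,8,1,0,0,0), (1,6,1,0,0,0), (1,4,1,0,0,0),
  (1,2,1,0,0,0), (0,1,0,0,0,0), (0,1,0,0,0,1), (0,1,0,0,1,1), (4,4,0,0,0,0), (4,2,0,0,0,0),
  (3,5,0,0,0,2), (3,3,0,0,0,2), (3,1,0,0,0,2), (3,5,0,0,0,1), (3,3,0,0,0,1), (3,1,0,0,0,1),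
  (3,6,0,0,0,0), (3,4,0,0,0,0), (3,2,0,0,0,0), (2,8,0,0,0,2), (2,6,0,0,0,2), (2,4,0,0,0,2),
  (2,2,0,0,0,2), (2,9,0,0,0,1), (2,7,0,0,0,1), (2,5,0,0,0,1), (2,3,0,0,0,1), (2,1,0,0,0,1),
  (2,9,0,0,0,0), (2,7,0,0,0,0), (2,5,0,0,0,0), (2,3,0,0,0,0), (2,1,0,0,0,0), (1,10,0,2,0,0),
  (1,8,0,2,0,0), (1,6,0,2,0,0), (1,4,0,2,0,0), (1,2,0,2,0,0), (1,0,0,1,0,0), (1,10,0,1,0,0),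
  (1,8,0,1,0,0), (1,6,0,1,0,0), (1,4,0,1,0,0), (1,2,0,1,0,0), (1,0,0,0,0,0), (1,11,0,0,0,0),
  (1,9,0,0,0,0), (1,7,0,0,0,0), (1,5,0,0,0,0), (1,3,0,0,0,0), (1,1,0,0,0,0)]

/-! ### Soundness of the elimination -/

/-- Exponents of the monomials of degree `d`. -/
def kmons (d : ℕ) : List (ℕ × ℕ × ℕ × ℕ) :=
  (List.range (d + 1)).flatMap fun a => (List.range (d - a + 1)).flatMap fun b =>
    (List.range (d - a - b + 1)).map fun c => (a, b, c, d - a - b - c)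

theorem force_eq {α : Type} (n : ℕ) (k : ℕ → α) : force n k = k n := by
  cases n <;> rfl

theorem kforceL_eq {α : Type} (l : List ℕ) (k : List ℕ → α) : kforceL l k = k l := by
  induction l generalizing k with
  | nil => rfl
  | cons v l ih =>
    change force v (fun v => kforceL l (fun l => k (v :: l))) = _
    rw [force_eq, ih]

/-- The linear form given by a packed row. -/
def phi {R : Type} [CommRing R] (B : ℕ) : ℕ → ℕ → (ℕ → R) → R
  | 0, _, _ => 0
  | n + 1, N, x => ((N % B : ℕ) : R) * x 0 + phi B n (N / B) (fun j => x (j + 1))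

/-- All slots are at most `K`. -/
def Bd (B K : ℕ) : ℕ → ℕ → Prop
  | 0, _ => True
  | n + 1, N => N % B ≤ K ∧ Bd B K n (N / B)

theorem Bd.mono {B K K' : ℕ} (h : K ≤ K') : ∀ {n N : ℕ}, Bd B K n N → Bd B K' n N
  | 0, _, _ => trivial
  | _ + 1, _, hN => ⟨hN.1.trans h, hN.2.mono h⟩

theorem slot_add {B K M c a u : ℕ} (hB : K + c * M < B) (ha : a % B ≤ K) (hu : u % B ≤ M) :
    (a + c * u) % B = a % B + c * (u % B) ∧ (a + c * u) / B = a / B + c * (u / B) := by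
  have hlt : a % B + c * (u % B) < B :=
    lt_of_le_of_lt (Nat.add_le_add ha (Nat.mul_le_mul_left c hu)) hB
  have hpos : 0 < B := by omega
  have e : a + c * u = (a % B + c * (u % B)) + B * (a / B + c * (u / B)) := by
    conv_lhs => rw [← Nat.mod_add_div a B, ← Nat.mod_add_div u B]
    ring
  constructor
  · rw [e, Nat.add_mul_mod_self_left, Nat.mod_eq_of_lt hlt]
  · rw [e, Nat.add_mul_div_left _ _ hpos, Nat.div_eq_of_lt hlt, zero_add]

theorem phi_add {R : Type} [CommRing R] {B K M c : ℕ} (hB : K + c * M < B) :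
    ∀ (n a u : ℕ) (x : ℕ → R), Bd B K n a → Bd B M n u →
      phi B n (a + c * u) x = phi B n a x + c * phi B n u x ∧ Bd B (K + c * M) n (a + c * u)
  | 0, _, _, _, _, _ => by simp [phi, Bd]
  | n + 1, a, u, x, ha, hu => by
    obtain ⟨h1, h2⟩ := slot_add hB ha.1 hu.1
    obtain ⟨h3, h4⟩ := phi_add hB n (a / B) (u / B) (fun j => x (j + 1)) ha.2 hu.2
    refine ⟨?_, ?_, ?_⟩
    · simp only [phi]
      rw [h1, h2, h3]
      push_cast
      ring
    · rw [h1]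
      exact Nat.add_le_add ha.1 (Nat.mul_le_mul_left c hu.1)
    · rw [h2]
      exact h4

theorem knorm_succ (p B v n N : ℕ) :
    knorm p B v (n + 1) N = (N % B * v) % p + B * knorm p B v n (N / B) := by
  change force N (fun N => Nat.add (Nat.mod (Nat.mul (Nat.mod N B) v) p)
    (Nat.mul B (knorm p B v n (Nat.div N B)))) = _
  rw [force_eq]
  rfl

theorem knorm_spec {p B : ℕ} (hp : 0 < p) (hpB : p < B) (v : ℕ) :
    ∀ (n N : ℕ) (x : ℕ → ZMod p),
      phi B n (knorm p B v n N) x = v * phi B n N x ∧ Bd B p n (knorm p B v n N)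
  | 0, _, _ => by simp [phi, Bd]
  | n + 1, N, x => by
    obtain ⟨h1, h2⟩ := knorm_spec hp hpB v n (N / B) (fun j => x (j + 1))
    have hlt : (N % B * v) % p < p := Nat.mod_lt _ hp
    have hm : knorm p B v (n + 1) N % B = (N % B * v) % p := by
      rw [knorm_succ, Nat.add_mul_mod_self_left, Nat.mod_eq_of_lt (hlt.trans hpB)]
    have hd : knorm p B v (n + 1) N / B = knorm p B v n (N / B) := by
      rw [knorm_succ, Nat.add_mul_div_left _ _ (hp.trans hpB), Nat.div_eq_of_lt (hlt.trans hpB),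
        zero_add]
    refine ⟨?_, ?_, ?_⟩
    · simp only [phi]
      rw [hm, hd, h1, ZMod.natCast_mod]
      push_cast
      ring
    · rw [hm]; exact hlt.le
    · rw [hd]; exact h2

theorem mem_kstep (p B u : ℕ) (rs : List ℕ) : ∀ (acc : List ℕ) (r2 : ℕ),
    r2 ∈ kstep p B u rs acc →
      r2 ∈ acc ∨ ∃ r ∈ rs, r2 = (r + (p - r % B % p) * u) / B := by
  induction rs with
  | nil => intro acc r2 h; exact Or.inl h
  | cons r rs ih =>
    intro acc r2 h
    change r2 ∈ force _ (fun r2 => kstep p B u rs (r2 :: acc)) at h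
    rw [force_eq] at h
    rcases ih _ _ h with h | ⟨r', hr', e⟩
    · rcases List.mem_cons.1 h with h | h
      · exact Or.inr ⟨r, by simp, h⟩
      · exact Or.inl h
    · exact Or.inr ⟨r', by simp [hr'], e⟩

theorem phi_zero {R : Type} [CommRing R] {B : ℕ} :
    ∀ (n N : ℕ) (x : ℕ → R), (∀ j < n, x j = 0) → phi B n N x = 0
  | 0, _, _, _ => rfl
  | n + 1, N, x, h => by
    simp only [phi]
    rw [h 0 (by omega), phi_zero n _ _ (fun j hj => h (j + 1) (by omega))]
    simp

theorem kelim_succ (p B n r : ℕ) (rs : List ℕ) (h : kelim p B (n + 1) (r :: rs) = true) :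
    ∃ v u, u = knorm p B v (n + 1) r ∧ u % B = 1 ∧ kelim p B n (kstep p B u rs []) = true := by
  change force (Nat.mod (Nat.pow (Nat.mod (Nat.mod r B) p) (Nat.sub p 2)) p) (fun v =>
    force (knorm p B v (Nat.succ n) r) fun u => Bool.rec (motive := fun _ => Bool) false
    (kelim p B n (kstep p B u rs [])) (Nat.beq (Nat.mod u B) 1)) = true at h
  rw [force_eq, force_eq] at h
  refine ⟨Nat.mod (Nat.pow (Nat.mod (Nat.mod r B) p) (Nat.sub p 2)) p, _, rfl, ?_⟩
  revert h
  generalize hb : Nat.beq _ 1 = b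
  cases b with
  | false => intro h; exact absurd h (by simp)
  | true => intro h; exact ⟨Nat.eq_of_beq_eq_true hb, h⟩

theorem kelim_sound {p B : ℕ} (hp : 0 < p) : ∀ (n K : ℕ) (rows : List ℕ) (x : ℕ → ZMod p),
    kelim p B n rows = true → K + n * (p * p) < B → p < B →
    (∀ r ∈ rows, Bd B K n r ∧ phi B n r x = 0) → ∀ j < n, x j = 0
  | 0, _, _, _, _, _, _, _ => by intro j hj; omega
  | n + 1, K, [], x, h, _, _, _ => by
    exact absurd h (by change ¬ (false = true); simp)
  | n + 1, K, r :: rs, x, h, hK, hpB, hr => by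
    obtain ⟨v, u, hu, hu1, hel⟩ := kelim_succ p B n r rs h
    obtain ⟨hphi, hbd⟩ := knorm_spec hp hpB v (n + 1) r x
    rw [← hu] at hphi hbd
    rw [(hr r (by simp)).2, mul_zero] at hphi
    have hpp : K + p * p + n * (p * p) < B := by
      have : (n + 1) * (p * p) = n * (p * p) + p * p := by ring
      omega
    have key : ∀ j < n, x (j + 1) = 0 := by
      refine kelim_sound hp n (K + p * p) _ (fun j => x (j + 1)) hel hpp hpB ?_
      intro r2 hr2
      rcases mem_kstep _ _ _ _ _ _ hr2 with h0 | ⟨r', hr', rfl⟩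
      · simp at h0
      obtain ⟨hb', hp'⟩ := hr r' (by simp [hr'])
      set c := p - r' % B % p with hc
      have hcp : c * p ≤ p * p := Nat.mul_le_mul_right p (by omega)
      have hKc : K + c * p < B := by omega
      obtain ⟨h1, h2⟩ := phi_add hKc (n + 1) r' u x hb' hbd
      rw [hp', hphi, mul_zero, add_zero] at h1
      refine ⟨Bd.mono (by omega) h2.2, ?_⟩
      have hs := (slot_add hKc hb'.1 hbd.1).1
      simp only [phi] at h1
      have h0 : (((r' + c * u) % B : ℕ) : ZMod p) = 0 := by
        rw [hs, hu1, mul_one]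
        have hle : r' % B % p ≤ p := (Nat.mod_lt _ hp).le
        have : ((r' % B + c : ℕ) : ZMod p) = ((r' % B % p + c : ℕ) : ZMod p) := by
          push_cast
          rw [ZMod.natCast_mod]
        rw [this, hc, Nat.add_sub_cancel' hle, ZMod.natCast_self]
      rw [h0, zero_mul, zero_add] at h1
      exact h1
    intro j hj
    cases j with
    | succ j => exact key j (by omega)
    | zero =>
      simp only [phi] at hphi
      rw [phi_zero n _ _ key, hu1] at hphi
      simpa using hphi

/-! ### Meaning of the packed rows -/

/-- Pack a list into a number. -/
def pack (B : ℕ) : List ℕ → ℕ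
  | [] => 0
  | a :: l => a + B * pack B l

theorem pack_append (B : ℕ) (l l' : List ℕ) :
    pack B (l ++ l') = pack B l + B ^ l.length * pack B l' := by
  induction l with
  | nil => simp [pack]
  | cons a l ih => simp only [List.cons_append, pack, ih, List.length_cons]; ring

theorem pack_map (B c : ℕ) (l : List ℕ) : pack B (l.map (c * ·)) = c * pack B l := by
  induction l with
  | nil => simp [pack]
  | cons a l ih => simp only [List.map_cons, pack, ih]; ring

/-- Pairing of a list of coefficients with a sequence. -/
def dotl {R : Type} [CommRing R] : List ℕ → (ℕ → R) → R
  | [], _ => 0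
  | a :: l, x => (a : R) * x 0 + dotl l (fun j => x (j + 1))

theorem phi_pack {R : Type} [CommRing R] {B K : ℕ} (hK : K < B) :
    ∀ (l : List ℕ) (x : ℕ → R), (∀ a ∈ l, a ≤ K) →
      phi B l.length (pack B l) x = dotl l x ∧ Bd B K l.length (pack B l)
  | [], _, _ => ⟨rfl, trivial⟩
  | a :: l, x, h => by
    have ha : a ≤ K := h a (by simp)
    obtain ⟨h1, h2⟩ := phi_pack hK l (fun j => x (j + 1)) (fun b hb => h b (by simp [hb]))
    have hm : pack B (a :: l) % B = a := by
      rw [pack, Nat.add_mul_mod_self_left, Nat.mod_eq_of_lt (by omega)]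
    have hd : pack B (a :: l) / B = pack B l := by
      rw [pack, Nat.add_mul_div_left _ _ (by omega), Nat.div_eq_of_lt (by omega), zero_add]
    refine ⟨?_, ?_, ?_⟩
    · simp only [List.length_cons, phi, dotl]
      rw [hm, hd, h1]
    · rw [hm]; exact ha
    · rw [hd]; exact h2

/-- The list `[g n, …, g 0]`. -/
def descl {α : Type} (g : ℕ → α) : ℕ → List α
  | 0 => [g 0]
  | n + 1 => g (n + 1) :: descl g n

theorem descl_eq {α : Type} (g : ℕ → α) (n : ℕ) :
    ((List.range (n + 1)).map g).reverse = descl g n := by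
  induction n with
  | zero => simp [descl]
  | succ n ih => rw [List.range_succ, List.map_append, List.reverse_append, ih]; simp [descl]

/-- Lists of coefficients with one more variable. -/
def convar (F : ℕ → ℕ) (g : ℕ → List ℕ) (s : ℕ) : List ℕ :=
  (List.range (s + 1)).flatMap fun a => (g (s - a)).map (F a * ·)

theorem convar_succ (F : ℕ → ℕ) (g : ℕ → List ℕ) (s : ℕ) :
    convar F g (s + 1) = (g (s + 1)).map (F 0 * ·) ++ convar (fun a => F (a + 1)) g s := by
  rw [convar, List.range_succ_eq_map, List.flatMap_cons, List.flatMap_map]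
  simp [convar]

theorem length_convar (F F' : ℕ → ℕ) (g : ℕ → List ℕ) (s : ℕ) :
    (convar F g s).length = (convar F' g s).length := by
  simp [convar, List.length_flatMap]

theorem kconv_eq (B : ℕ) (g : ℕ → List ℕ) : ∀ (s : ℕ) (F : ℕ → ℕ) (f : List ℕ),
    (∀ a ≤ s, f[a]? = some (F a)) →
    kconv B (descl (fun t => (pack B (g t), (g t).length)) s) f = pack B (convar F g s)
  | 0, F, [], h => by simpa using h 0 le_rfl
  | s + 1, F, [], h => by simpa using h 0 (by omega)
  | 0, F, a :: f, h => by
    have h0 : a = F 0 := by simpa using h 0 le_rfl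
    change a * pack B (g 0) + B ^ (g 0).length * 0 = _
    simp [convar, pack_map, h0]
  | s + 1, F, a :: f, h => by
    have h0 : a = F 0 := by simpa using h 0 (by omega)
    change a * pack B (g (s + 1)) + B ^ (g (s + 1)).length *
      kconv B (descl (fun t => (pack B (g t), (g t).length)) s) f = _
    rw [kconv_eq B g s (fun a => F (a + 1)) f (fun b hb => by simpa using h (b + 1) (by omega)),
      convar_succ, pack_append, pack_map, List.length_map, h0]

theorem ktab_eq {α : Type} (B : ℕ) (g : ℕ → List ℕ) (F : ℕ → ℕ) (f : List ℕ) :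
    ∀ (s : ℕ) (k : List (ℕ × ℕ) → ℕ → α), (∀ a ≤ s, f[a]? = some (F a)) →
    ktab B f (descl (fun t => (pack B (g t), (g t).length)) s) k =
      k (descl (fun t => (pack B (convar F g t), (convar F g t).length)) s)
        (convar F g s).length
  | 0, k, h => by
    have h1 := kconv_eq B g 0 F f h
    simp only [descl] at h1
    change force (kconv B [(pack B (g 0), (g 0).length)] f)
      (fun v => force ((g 0).length + 0) fun len' => k [(v, len')] len') = _
    rw [force_eq, force_eq, h1]
    simp [descl, convar]
  | s + 1, k, h => by
    have h1 := kconv_eq B g (s + 1) F f h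
    simp only [descl] at h1
    change ktab B f (descl (fun t => (pack B (g t), (g t).length)) s)
      (fun l len => force (kconv B ((pack B (g (s + 1)), (g (s + 1)).length) ::
        descl (fun t => (pack B (g t), (g t).length)) s) f) fun v =>
        force ((g (s + 1)).length + len) fun len' => k ((v, len') :: l) len') = _
    rw [ktab_eq B g F f s _ (fun a ha => h a (by omega)), force_eq, force_eq, h1]
    have h2 : (g (s + 1)).length + (convar F g s).length = (convar F g (s + 1)).length := by
      rw [convar_succ, List.length_append, List.length_map, length_convar F (fun a => F (a + 1))]
    rw [h2]
    rfl

theorem ktab0_eq {α : Type} (F : ℕ → ℕ) (B : ℕ) : ∀ (s : ℕ) (k : List (ℕ × ℕ) → α),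
    ktab0 (descl F s) k = k (descl (fun t => (pack B [F t], [F t].length)) s)
  | 0, k => by simp [descl, pack, ktab0]
  | s + 1, k => by
    change ktab0 (descl F s) (fun l => k ((F (s + 1), 1) :: l)) = _
    rw [ktab0_eq F B s]
    simp [descl, pack]

/-- The entries of a row. -/
def kentry (p : ℕ) (x0 x1 x2 x3 a0 a1 a2 a3 : ℕ) (m : ℕ × ℕ × ℕ × ℕ) : ℕ :=
  kf p x0 a0 m.1 * (kf p x1 a1 m.2.1 * (kf p x2 a2 m.2.2.1 * kf p x3 a3 m.2.2.2))

theorem krow_eq (p B d x0 x1 x2 x3 a0 a1 a2 a3 : ℕ) :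
    krow p B d x0 x1 x2 x3 a0 a1 a2 a3 =
      pack B ((kmons d).map (kentry p x0 x1 x2 x3 a0 a1 a2 a3)) := by
  have hl : ∀ (F : ℕ → ℕ), ∀ a ≤ d, ((List.range (Nat.succ d)).map F)[a]? = some (F a) := by
    intro F a ha
    simp [List.getElem?_range (show a < d + 1 by omega)]
  unfold krow
  rw [kforceL_eq, kforceL_eq, kforceL_eq, kforceL_eq, descl_eq, ktab0_eq _ B,
    ktab_eq B _ _ _ d _ (hl _), ktab_eq B _ _ _ d _ (hl _), kconv_eq B _ d _ _ (hl _)]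
  congr 1
  simp only [convar, kmons, List.map_flatMap, List.map_map, List.map_cons, List.map_nil]
  refine List.flatMap_congr fun a _ => List.flatMap_congr fun b _ => ?_
  rw [List.map_eq_flatMap]
  refine List.flatMap_congr fun c _ => ?_
  simp [kentry]

theorem kf_lt {p : ℕ} (hp : 0 < p) (x a n : ℕ) : kf p x a n ≤ p := (Nat.mod_lt _ hp).le

theorem kentry_le {p : ℕ} (hp : 0 < p) (x0 x1 x2 x3 a0 a1 a2 a3 : ℕ) (m : ℕ × ℕ × ℕ × ℕ) :
    kentry p x0 x1 x2 x3 a0 a1 a2 a3 m ≤ p * (p * (p * p)) := by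
  unfold kentry
  gcongr <;> exact kf_lt hp _ _ _

theorem mem_krows (p B d : ℕ) (V : Fin 7 → Fin 2 → Fin 4 → ℕ) (S : List Spec) :
    ∀ (acc : List ℕ) (r : ℕ), r ∈ krows p B d V S acc → r ∈ acc ∨ ∃ s ∈ S,
      r = pack B ((kmons d).map (kentry p
        (V s.1 0 0 + s.2.1 * V s.1 1 0) (V s.1 0 1 + s.2.1 * V s.1 1 1)
        (V s.1 0 2 + s.2.1 * V s.1 1 2) (V s.1 0 3 + s.2.1 * V s.1 1 3)
        s.2.2.1 s.2.2.2.1 s.2.2.2.2.1 s.2.2.2.2.2)) := by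
  induction S with
  | nil => intro acc r h; exact Or.inl h
  | cons s S ih =>
    intro acc r h
    change r ∈ force (Nat.add (V s.1 0 0) (Nat.mul s.2.1 (V s.1 1 0))) (fun x0 =>
      force (Nat.add (V s.1 0 1) (Nat.mul s.2.1 (V s.1 1 1))) fun x1 =>
      force (Nat.add (V s.1 0 2) (Nat.mul s.2.1 (V s.1 1 2))) fun x2 =>
      force (Nat.add (V s.1 0 3) (Nat.mul s.2.1 (V s.1 1 3))) fun x3 =>
      force (krow p B d x0 x1 x2 x3 s.2.2.1 s.2.2.2.1 s.2.2.2.2.1 s.2.2.2.2.2)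
        fun r => krows p B d V S (r :: acc)) at h
    simp only [force_eq] at h
    rcases ih _ _ h with h | ⟨s', hs', e⟩
    · rcases List.mem_cons.1 h with h | h
      · exact Or.inr ⟨s, by simp, h.trans (krow_eq ..)⟩
      · exact Or.inl h
    · exact Or.inr ⟨s', by simp [hs'], e⟩

/-! ### Conditions as matrices -/

/-- The point of the configuration `w` to which a condition refers. -/
def ptOf {R : Type} [CommRing R] (w : Fin 7 → Fin 2 → Fin 4 → R) (s : Spec) (c : Fin 4) : R :=
  w s.1 0 c + (s.2.1 : R) * w s.1 1 c

/-- The value of a condition on a monomial. -/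
def ent {R : Type} [CommRing R] (x : Fin 4 → R) (s : Spec) (m : ℕ × ℕ × ℕ × ℕ) : R :=
  (m.1.descFactorial s.2.2.1 : R) * x 0 ^ (m.1 - s.2.2.1) *
  ((m.2.1.descFactorial s.2.2.2.1 : R) * x 1 ^ (m.2.1 - s.2.2.2.1) *
  ((m.2.2.1.descFactorial s.2.2.2.2.1 : R) * x 2 ^ (m.2.2.1 - s.2.2.2.2.1) *
  ((m.2.2.2.descFactorial s.2.2.2.2.2 : R) * x 3 ^ (m.2.2.2 - s.2.2.2.2.2))))

/-- The matrix of a list of conditions. -/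
def Mat {R : Type} [CommRing R] (d : ℕ) (S : List Spec) (w : Fin 7 → Fin 2 → Fin 4 → R) :
    Matrix (Fin (kmons d).length) (Fin (kmons d).length) R :=
  fun k j => ent (ptOf w (S.getD k (0, 0, 0, 0, 0, 0))) (S.getD k (0, 0, 0, 0, 0, 0))
    (kmons d)[j]

theorem dotl_map {R : Type} [CommRing R] {α : Type} (h : α → ℕ) : ∀ (l : List α) (x : ℕ → R),
    dotl (l.map h) x = ∑ j : Fin l.length, (h l[j] : R) * x j
  | [], _ => by simp [dotl]
  | a :: l, x => by
    change (h a : R) * x 0 + dotl (l.map h) (fun j => x (j + 1)) = _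
    rw [dotl_map h l]
    exact (Fin.sum_univ_succ (fun j : Fin (l.length + 1) => (h (a :: l)[j] : R) * x j)).symm

theorem kentry_cast (p : ℕ) (V : Fin 7 → Fin 2 → Fin 4 → ℕ) (s : Spec) (m : ℕ × ℕ × ℕ × ℕ) :
    ((kentry p
        (V s.1 0 0 + s.2.1 * V s.1 1 0) (V s.1 0 1 + s.2.1 * V s.1 1 1)
        (V s.1 0 2 + s.2.1 * V s.1 1 2) (V s.1 0 3 + s.2.1 * V s.1 1 3)
        s.2.2.1 s.2.2.2.1 s.2.2.2.2.1 s.2.2.2.2.2 m : ℕ) : ZMod p) =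
      ent (ptOf (fun i j c => (V i j c : ZMod p)) s) s m := by
  have hkf : ∀ x a n : ℕ, ((kf p x a n : ℕ) : ZMod p) =
      (n.descFactorial a : ZMod p) * (x : ZMod p) ^ (n - a) := by
    intro x a n
    change (((n.descFactorial a * x ^ (n - a)) % p : ℕ) : ZMod p) = _
    rw [ZMod.natCast_mod]
    push_cast
    rfl
  simp only [kentry, ent, ptOf, Nat.cast_mul, hkf, Nat.cast_add]

theorem det_ne_zero {p B d N : ℕ} [Fact p.Prime] {V : Fin 7 → Fin 2 → Fin 4 → ℕ}
    {S : List Spec} (h : kcheck p B d N V S = true) (hN : (kmons d).length = N)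
    (hS : S.length = N) (hB : p * (p * (p * p)) + N * (p * p) < B) (hpB : p < B) :
    (Mat d S (fun i j c => (V i j c : ZMod p))).det ≠ 0 := by
  have hp : 0 < p := (Fact.out : p.Prime).pos
  subst hN
  intro hdet
  obtain ⟨x, hx0, hx⟩ := Matrix.exists_mulVec_eq_zero_iff.2 hdet
  apply hx0
  set x' : ℕ → ZMod p := fun j => if h : j < (kmons d).length then x ⟨j, h⟩ else 0 with hx'
  have key : ∀ j < (kmons d).length, x' j = 0 := by
    refine kelim_sound hp _ (p * (p * (p * p))) _ x' h hB hpB ?_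
    intro r hr
    rcases mem_krows _ _ _ _ _ _ _ hr with h0 | ⟨s, hs, rfl⟩
    · simp at h0
    obtain ⟨h1, h2⟩ := phi_pack (K := p * (p * (p * p))) (B := B) (by omega)
      ((kmons d).map (kentry p
        (V s.1 0 0 + s.2.1 * V s.1 1 0) (V s.1 0 1 + s.2.1 * V s.1 1 1)
        (V s.1 0 2 + s.2.1 * V s.1 1 2) (V s.1 0 3 + s.2.1 * V s.1 1 3)
        s.2.2.1 s.2.2.2.1 s.2.2.2.2.1 s.2.2.2.2.2)) x' (by
          intro a ha
          obtain ⟨m, _, rfl⟩ := List.mem_map.1 ha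
          exact kentry_le hp _ _ _ _ _ _ _ _ _)
    rw [List.length_map] at h1 h2
    refine ⟨h2, ?_⟩
    rw [h1, dotl_map]
    obtain ⟨k, hk, rfl⟩ := List.getElem_of_mem hs
    have := congrFun hx ⟨k, hS ▸ hk⟩
    rw [Matrix.mulVec, dotProduct, Pi.zero_apply] at this
    rw [← this]
    refine Finset.sum_congr rfl fun j _ => ?_
    rw [kentry_cast]
    simp [Mat, hx', hk]
  funext j
  have := key j j.2
  simpa [hx'] using this

/-- The nonvanishing of the determinant is an open condition. -/
theorem exists_poly {p B d N : ℕ} [Fact p.Prime] {V : Fin 7 → Fin 2 → Fin 4 → ℕ}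
    {S : List Spec} (h : kcheck p B d N V S = true) (hN : (kmons d).length = N)
    (hS : S.length = N) (hB : p * (p * (p * p)) + N * (p * p) < B) (hpB : p < B) :
    ∃ P : MvPolynomial (Fin 7 × Fin 2 × Fin 4) ℂ, P ≠ 0 ∧
      ∀ v : Fin 7 → Fin 2 → C4, eval (fun q => v q.1 q.2.1 q.2.2) P ≠ 0 →
        (Mat d S v).det ≠ 0 := by
  set P0 : MvPolynomial (Fin 7 × Fin 2 × Fin 4) ℤ := (Mat d S (fun i j c => X (i, j, c))).det
    with hP0
  have hmap : ∀ (R : Type) [CommRing R] (w : Fin 7 → Fin 2 → Fin 4 → R),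
      eval₂Hom (Int.castRingHom R) (fun q => w q.1 q.2.1 q.2.2) P0 = (Mat d S w).det := by
    intro R _ w
    rw [hP0, RingHom.map_det]
    congr 1
    ext k j
    simp [Mat, ent, ptOf]
  refine ⟨map (Int.castRingHom ℂ) P0, ?_, ?_⟩
  · intro h0
    have h1 : P0 = 0 := by
      apply map_injective (Int.castRingHom ℂ) Int.cast_injective
      rw [h0, map_zero]
    have h2 := hmap (ZMod p) (fun i j c => (V i j c : ZMod p))
    rw [h1, map_zero] at h2
    exact det_ne_zero h hN hS hB hpB h2.symm
  · intro v hv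
    rw [eval_map] at hv
    rw [← hmap ℂ v]
    exact hv

/-! ### Conditions on polynomials -/

/-- The exponent vector. -/
def mexp (m : ℕ × ℕ × ℕ × ℕ) : Fin 4 →₀ ℕ :=
  Finsupp.equivFunOnFinite.symm ![m.1, m.2.1, m.2.2.1, m.2.2.2]

/-- Iterated partial derivative. -/
def dop (s : Spec) : R3 →ₗ[ℂ] R3 :=
  ((pderiv (R := ℂ) (0 : Fin 4)).toLinearMap ^ s.2.2.1) ∘ₗ
  ((pderiv (R := ℂ) (1 : Fin 4)).toLinearMap ^ s.2.2.2.1) ∘ₗ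
  ((pderiv (R := ℂ) (2 : Fin 4)).toLinearMap ^ s.2.2.2.2.1) ∘ₗ
  ((pderiv (R := ℂ) (3 : Fin 4)).toLinearMap ^ s.2.2.2.2.2)

/-- A condition as a linear form on polynomials. -/
def lcond (v : Fin 7 → Fin 2 → C4) (s : Spec) : R3 →ₗ[ℂ] ℂ :=
  (aeval (ptOf v s)).toLinearMap ∘ₗ dop s

theorem pow_pderiv_monomial (i : Fin 4) (n : ℕ) (m : Fin 4 →₀ ℕ) (c : ℂ) :
    ((pderiv (R := ℂ) i).toLinearMap ^ n) (monomial m c) =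
      monomial (m - Finsupp.single i n) (c * ((m i).descFactorial n : ℂ)) := by
  induction n with
  | zero => simp
  | succ n ih =>
    rw [pow_succ', Module.End.mul_apply, ih]
    change pderiv i _ = _
    rw [pderiv_monomial, tsub_tsub, ← Finsupp.single_add, Nat.descFactorial_succ]
    congr 1
    simp
    ring

theorem cond_monomial (v : Fin 7 → Fin 2 → C4) (s : Spec) (m : ℕ × ℕ × ℕ × ℕ) (c : ℂ) :
    lcond v s (monomial (mexp m) c) = c * ent (ptOf v s) s m := by
  simp only [lcond, dop, LinearMap.comp_apply, pow_pderiv_monomial, AlgHom.toLinearMap_apply,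
    aeval_monomial, Finsupp.prod_fintype, pow_zero, implies_true, Fin.prod_univ_four]
  have h0 : mexp m 0 = m.1 := rfl
  have h1 : mexp m 1 = m.2.1 := rfl
  have h2 : mexp m 2 = m.2.2.1 := rfl
  have h3 : mexp m 3 = m.2.2.2 := rfl
  simp [h0, h1, h2, h3, ent]
  ring

theorem mexp_inj {m m' : ℕ × ℕ × ℕ × ℕ} (h : mexp m = mexp m') : m = m' := by
  obtain ⟨a, b, c, e⟩ := m
  obtain ⟨a', b', c', e'⟩ := m'
  have h' := fun i => DFunLike.congr_fun h i
  have h0 := h' 0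
  have h1 := h' 1
  have h2 := h' 2
  have h3 := h' 3
  simp [mexp] at h0 h1 h2 h3
  simp [h0, h1, h2, h3]

theorem mem_kmons {d : ℕ} {m : ℕ × ℕ × ℕ × ℕ} :
    m ∈ kmons d ↔ m.1 + m.2.1 + m.2.2.1 + m.2.2.2 = d := by
  obtain ⟨a, b, c, e⟩ := m
  simp only [kmons, List.mem_flatMap, List.mem_range, List.mem_map, Prod.mk.injEq]
  constructor
  · rintro ⟨a', _, b', _, c', _, rfl, rfl, rfl, rfl⟩
    omega
  · intro h
    exact ⟨a, by omega, b, by omega, c, by omega, rfl, rfl, rfl, by omega⟩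

theorem nodup_kmons (d : ℕ) : (kmons d).Nodup := by
  unfold kmons
  rw [List.nodup_flatMap]
  refine ⟨fun a _ => ?_, ?_⟩
  · rw [List.nodup_flatMap]
    refine ⟨fun b _ => ?_, ?_⟩
    · refine List.Nodup.map (fun c c' h => ?_) List.nodup_range
      simp only [Prod.mk.injEq] at h
      exact h.2.2.1
    · refine List.Pairwise.imp ?_ List.pairwise_lt_range
      intro b b' hb m h1 h2
      simp only [List.mem_map] at h1 h2
      obtain ⟨c, _, rfl⟩ := h1
      obtain ⟨c', _, h⟩ := h2
      simp only [Prod.mk.injEq] at h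
      omega
  · refine List.Pairwise.imp ?_ List.pairwise_lt_range
    intro a a' ha m h1 h2
    simp only [List.mem_flatMap, List.mem_map] at h1 h2
    obtain ⟨b, _, c, _, rfl⟩ := h1
    obtain ⟨b', _, c', _, h⟩ := h2
    simp only [Prod.mk.injEq] at h
    omega

theorem sum_kmons {d : ℕ} {F : R3} (hF : F.IsHomogeneous d) :
    F = ∑ j : Fin (kmons d).length, monomial (mexp (kmons d)[j]) (coeff (mexp (kmons d)[j]) F) := by
  classical
  ext e
  rw [coeff_sum]
  simp only [coeff_monomial]
  by_cases he : ∃ j : Fin (kmons d).length, mexp (kmons d)[j] = e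
  · obtain ⟨j, rfl⟩ := he
    rw [Finset.sum_eq_single j]
    · simp
    · intro k _ hk
      rw [if_neg]
      intro h
      apply hk
      have := mexp_inj h
      exact Fin.ext ((nodup_kmons d).getElem_inj_iff.1 this)
    · simp
  · push Not at he
    rw [Finset.sum_eq_zero (fun j _ => if_neg (he j))]
    by_contra hne
    have hd := hF hne
    have hm : (e 0, e 1, e 2, e 3) ∈ kmons d := by
      rw [mem_kmons, ← hd, Finsupp.weight_apply, Finsupp.sum_fintype _ _ (by simp)]
      simp [Fin.sum_univ_four]
    obtain ⟨k, hk, hk'⟩ := List.getElem_of_mem hm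
    apply he ⟨k, hk⟩
    change mexp (kmons d)[k] = e
    rw [hk']
    ext i
    fin_cases i <;> rfl

theorem homogeneous_mexp {d : ℕ} (j : Fin (kmons d).length) (c : ℂ) :
    (monomial (mexp (kmons d)[j]) c : R3).IsHomogeneous d := by
  apply isHomogeneous_monomial
  have := mem_kmons.1 (List.getElem_mem (l := kmons d) j.2)
  rw [Finsupp.degree_eq_sum, Fin.sum_univ_four]
  simpa [mexp] using this

theorem cond_eq_mulVec {d : ℕ} {S : List Spec} (v : Fin 7 → Fin 2 → C4)
    (x : Fin (kmons d).length → ℂ) (k : Fin (kmons d).length) :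
    lcond v (S.getD k (0, 0, 0, 0, 0, 0)) (∑ j, monomial (mexp (kmons d)[j]) (x j)) =
      (Mat d S v).mulVec x k := by
  rw [map_sum, Matrix.mulVec, dotProduct]
  refine Finset.sum_congr rfl fun j _ => ?_
  rw [cond_monomial, mul_comm]
  rfl

theorem eq_zero_of_cond {d : ℕ} {S : List Spec} {v : Fin 7 → Fin 2 → C4}
    (hS : S.length = (kmons d).length) (hdet : (Mat d S v).det ≠ 0) {F : R3}
    (hF : F.IsHomogeneous d) (h : ∀ s ∈ S, lcond v s F = 0) : F = 0 := by
  have hx : (fun j : Fin (kmons d).length => coeff (mexp (kmons d)[j]) F) = 0 := by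
    apply Matrix.eq_zero_of_mulVec_eq_zero hdet
    funext k
    rw [← cond_eq_mulVec, ← sum_kmons hF]
    apply h
    rw [List.getD_eq_getElem _ _ (by rw [hS]; exact k.2)]
    exact List.getElem_mem _
  rw [sum_kmons hF]
  refine Finset.sum_eq_zero fun j _ => ?_
  have := congrFun hx j
  simp only [Pi.zero_apply] at this
  rw [this, monomial_zero]

theorem exists_cond {d : ℕ} {S : List Spec} {v : Fin 7 → Fin 2 → C4}
    (hS : S.length = (kmons d).length) (hdet : (Mat d S v).det ≠ 0) (Y : Spec → ℂ) :
    ∃ F : R3, F.IsHomogeneous d ∧ ∀ s ∈ S, lcond v s F = Y s := by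
  have hu : IsUnit (Mat d S v).det := isUnit_iff_ne_zero.2 hdet
  set y : Fin (kmons d).length → ℂ := fun k => Y (S.getD k (0, 0, 0, 0, 0, 0)) with hy
  refine ⟨∑ j, monomial (mexp (kmons d)[j]) ((Mat d S v)⁻¹.mulVec y j), ?_, ?_⟩
  · exact IsHomogeneous.sum _ _ _ fun j _ => homogeneous_mexp j _
  · intro s hs
    obtain ⟨k, hk, rfl⟩ := List.getElem_of_mem hs
    have := cond_eq_mulVec (S := S) v ((Mat d S v)⁻¹.mulVec y) ⟨k, hS ▸ hk⟩
    rw [Matrix.mulVec_mulVec, Matrix.mul_nonsing_inv _ hu, Matrix.one_mulVec, hy] at this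
    simp only [List.getD_eq_getElem _ _ hk] at this
    exact this


/-! ### Ideals of lines -/

theorem pderiv_mem_pow (I : Ideal R3) (i : Fin 4) (n : ℕ) :
    ∀ {F : R3}, F ∈ I ^ (n + 1) → pderiv i F ∈ I ^ n := by
  induction n with
  | zero => intro F _; simp
  | succ n ih =>
    intro F hF
    rw [pow_succ'] at hF
    refine Submodule.mul_induction_on hF ?_ ?_
    · intro a ha b hb
      rw [Derivation.leibniz]
      refine Ideal.add_mem _ ?_ ?_
      · rw [smul_eq_mul, pow_succ']
        exact Ideal.mul_mem_mul ha (ih hb)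
      · rw [smul_eq_mul]
        exact Ideal.mul_mem_right _ _ hb
    · intro x y hx hy
      rw [map_add]
      exact Ideal.add_mem _ hx hy

theorem pow_pderiv_mem_pow (I : Ideal R3) (i : Fin 4) (k : ℕ) :
    ∀ (n : ℕ) {F : R3}, F ∈ I ^ (n + k) → ((pderiv (R := ℂ) i).toLinearMap ^ k) F ∈ I ^ n := by
  induction k with
  | zero => intro n F hF; simpa using hF
  | succ k ih =>
    intro n F hF
    rw [pow_succ', Module.End.mul_apply]
    apply pderiv_mem_pow
    apply ih
    rwa [show n + 1 + k = n + (k + 1) by omega]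

theorem dop_mem (I : Ideal R3) (s : Spec) {F : R3}
    (hF : F ∈ I ^ (1 + s.2.2.1 + s.2.2.2.1 + s.2.2.2.2.1 + s.2.2.2.2.2)) : dop s F ∈ I := by
  have := pow_pderiv_mem_pow I 0 _ _ (pow_pderiv_mem_pow I 1 _ _ (pow_pderiv_mem_pow I 2 _ _
    (pow_pderiv_mem_pow I 3 _ _ hF)))
  rwa [pow_one] at this

theorem lcond_eq_zero (v : Fin 7 → Fin 2 → C4) (s : Spec) {m : ℕ} {F : R3}
    (hF : F ∈ (lineIdeal (Submodule.span ℂ {v s.1 0, v s.1 1})) ^ m)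
    (hm : s.2.2.1 + s.2.2.2.1 + s.2.2.2.2.1 + s.2.2.2.2.2 < m) : lcond v s F = 0 := by
  have h := dop_mem _ s (Ideal.pow_le_pow_right (show _ ≤ m by omega) hF)
  have := h (ptOf v s) (by
    have h1 : ptOf v s = v s.1 0 + (s.2.1 : ℂ) • v s.1 1 := by
      funext c
      simp [ptOf]
    rw [h1]
    refine Submodule.add_mem _ (Submodule.subset_span (by simp))
      (Submodule.smul_mem _ _ (Submodule.subset_span (by simp))))
  simpa [lcond, aeval_eq_eval] using this

theorem lcond_zero (v : Fin 7 → Fin 2 → C4) (i : Fin 7) (l : ℕ) (F : R3) :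
    lcond v (i, l, 0, 0, 0, 0) F = eval (v i 0 + (l : ℂ) • v i 1) F := by
  have h1 : ptOf v (i, l, 0, 0, 0, 0) = v i 0 + (l : ℂ) • v i 1 := by
    funext c
    simp [ptOf]
  simp [lcond, dop, h1, aeval_eq_eval]

theorem lcond_grad (v : Fin 7 → Fin 2 → C4) (i : Fin 7) (F : R3) :
    lcond v (i, 0, 1, 0, 0, 0) F = eval (v i 0) (pderiv 0 F) ∧
    lcond v (i, 0, 0, 1, 0, 0) F = eval (v i 0) (pderiv 1 F) ∧
    lcond v (i, 0, 0, 0, 1, 0) F = eval (v i 0) (pderiv 2 F) ∧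
    lcond v (i, 0, 0, 0, 0, 1) F = eval (v i 0) (pderiv 3 F) := by
  have h1 : ∀ t, ptOf v (i, 0, t) = v i 0 := by
    intro t
    funext c
    simp [ptOf]
  simp [lcond, dop, h1, aeval_eq_eval]

/-- The restriction of a form to a parametrized line. -/
def restr (a b : C4) (q : R3) : Polynomial ℂ :=
  aeval (fun i => Polynomial.C (a i) + Polynomial.X * Polynomial.C (b i)) q

theorem eval_restr (a b : C4) (q : R3) (t : ℂ) :
    (restr a b q).eval t = eval (a + t • b) q := by
  unfold restr
  rw [← Polynomial.coe_evalRingHom, aeval_def, hom_eval₂]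
  rw [← eval₂_id]
  congr 1
  · ext x
    simp
  · funext i
    simp
    ring

theorem natDegree_restr (a b : C4) {q : R3} {d : ℕ} (hq : q.IsHomogeneous d) :
    (restr a b q).natDegree ≤ d := by
  have h : ∀ i, (Polynomial.C (a i) + Polynomial.X * Polynomial.C (b i)).natDegree ≤ 1 := by
    intro i
    refine (Polynomial.natDegree_add_le _ _).trans ?_
    rw [Polynomial.natDegree_C]
    refine max_le (by norm_num) ?_
    refine (Polynomial.natDegree_mul_le).trans ?_
    rw [Polynomial.natDegree_C]
    exact Polynomial.natDegree_X_le
  have h2 := aeval_natDegree_le (m := d) (n := 1) q hq.totalDegree_le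
    (fun i => Polynomial.C (a i) + Polynomial.X * Polynomial.C (b i)) h
  rw [mul_one] at h2
  exact h2

theorem eval_smul_homogeneous {q : R3} {d : ℕ} (hq : q.IsHomogeneous d) (s : ℂ) (x : C4) :
    eval (s • x) q = s ^ d * eval x q := by
  rw [eval_eq, eval_eq, Finset.mul_sum]
  refine Finset.sum_congr rfl fun e he => ?_
  have h1 := hq (mem_support_iff.1 he)
  rw [Finsupp.weight_apply, Finsupp.sum] at h1
  simp only [smul_eq_mul, Pi.one_apply, mul_one] at h1
  rw [← h1]
  simp only [Pi.smul_apply, smul_eq_mul, mul_pow, Finset.prod_mul_distrib, Finset.prod_pow_eq_pow_sum]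
  ring

theorem mem_lineIdeal {a b : C4} {q : R3} (hq : q.IsHomogeneous 4)
    (h : ∀ l : Fin 5, eval (a + (l.1 : ℂ) • b) q = 0) :
    q ∈ lineIdeal (Submodule.span ℂ {a, b}) := by
  have h0 : restr a b q = 0 := by
    refine Polynomial.eq_zero_of_natDegree_lt_card_of_eval_eq_zero (restr a b q)
      (f := fun l : Fin 5 => (l.1 : ℂ)) ?_ ?_ ?_
    · intro l l' hl
      exact Fin.ext (Nat.cast_injective hl)
    · intro l
      rw [eval_restr]
      exact h l
    · have := natDegree_restr a b hq
      simp
      omega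
  have h1 : ∀ t : ℂ, eval (a + t • b) q = 0 := by
    intro t
    rw [← eval_restr, h0, Polynomial.eval_zero]
  have h2 : ∀ s t : ℂ, s ≠ 0 → eval (s • a + t • b) q = 0 := by
    intro s t hs
    have h3 : s • a + t • b = s • (a + (t / s) • b) := by
      rw [smul_add, smul_smul, mul_div_cancel₀ _ hs]
    rw [h3, eval_smul_homogeneous hq, h1, mul_zero]
  have h4 : ∀ t : ℂ, restr (t • b) a q = 0 := by
    intro t
    apply Polynomial.eq_zero_of_infinite_isRoot
    refine Set.Infinite.mono (s := {x : ℂ | x ≠ 0}) ?_ ?_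
    · intro x hx
      change Polynomial.eval _ _ = 0
      rw [eval_restr, add_comm]
      exact h2 _ _ hx
    · exact (Set.finite_singleton (0 : ℂ)).infinite_compl
  intro x hx
  obtain ⟨s, t, rfl⟩ := Submodule.mem_span_pair.1 hx
  rw [add_comm, ← eval_restr, h4, Polynomial.eval_zero]

/-! ### Independence -/

/-- The matrix of the spanning vectors of two lines. -/
def M4 {R : Type} (v : Fin 7 → Fin 2 → Fin 4 → R) (i j : Fin 7) : Matrix (Fin 4) (Fin 4) R :=
  ![v i 0, v i 1, v j 0, v j 1]

theorem exists_M4_poly : ∃ P : MvPolynomial (Fin 7 × Fin 2 × Fin 4) ℂ, P ≠ 0 ∧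
    ∀ v : Fin 7 → Fin 2 → C4, eval (fun p => v p.1 p.2.1 p.2.2) P ≠ 0 →
      ∀ i j, i ≠ j → (M4 v i j).det ≠ 0 := by
  let W : Fin 7 → Fin 2 → Fin 4 → MvPolynomial (Fin 7 × Fin 2 × Fin 4) ℂ :=
    fun i k c => X (i, k, c)
  have hev : ∀ (v : Fin 7 → Fin 2 → C4) (i j : Fin 7),
      eval (fun p => v p.1 p.2.1 p.2.2) (M4 W i j).det = (M4 v i j).det := by
    intro v i j
    rw [RingHom.map_det]
    congr 1
    ext k c
    rw [RingHom.mapMatrix_apply, Matrix.map_apply]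
    fin_cases k <;> simp [M4, W]
  refine ⟨∏ i, ∏ j, if i = j then 1 else (M4 W i j).det, ?_, ?_⟩
  · rw [Finset.prod_ne_zero_iff]
    intro i _
    rw [Finset.prod_ne_zero_iff]
    intro j _
    split_ifs with hij
    · exact one_ne_zero
    · intro h
      have := hev (fun k => if k = i then ![Pi.single 0 1, Pi.single 1 1]
        else ![Pi.single 2 1, Pi.single 3 1]) i j
      rw [h, map_zero] at this
      have h1 : M4 (fun k => if k = i then ![Pi.single 0 1, Pi.single 1 1]
        else ![Pi.single 2 1, Pi.single 3 1] : Fin 7 → Fin 2 → C4) i j = 1 := by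
        ext k c
        fin_cases k <;> fin_cases c <;> simp [M4, Ne.symm hij]
      rw [h1, Matrix.det_one] at this
      exact zero_ne_one this
  · intro v hv i j hij
    simp only [map_prod] at hv
    rw [Finset.prod_ne_zero_iff] at hv
    have h1 := hv i (Finset.mem_univ _)
    rw [Finset.prod_ne_zero_iff] at h1
    have h2 := h1 j (Finset.mem_univ _)
    rwa [if_neg hij, hev] at h2

theorem linInd_of_det {a b c d : C4}
    (h : Matrix.det (show Matrix (Fin 4) (Fin 4) ℂ from ![a, b, c, d]) ≠ 0) :
    ∀ x y z w : ℂ, x • a + y • b + z • c + w • d = 0 → x = 0 ∧ y = 0 ∧ z = 0 ∧ w = 0 := by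
  intro x y z w hx
  have h1 : Matrix.vecMul ![x, y, z, w] (![a, b, c, d] : Matrix (Fin 4) (Fin 4) ℂ) = 0 := by
    rw [← hx]
    funext k
    simp [Matrix.vecMul, dotProduct, Fin.sum_univ_four]
  have h2 := Matrix.eq_zero_of_vecMul_eq_zero h h1
  exact ⟨congrFun h2 0, congrFun h2 1, congrFun h2 2, congrFun h2 3⟩

theorem dual_form {M : Matrix (Fin 4) (Fin 4) ℂ} (h : M.det ≠ 0) (j : Fin 4) :
    ∃ S : R3, S.IsHomogeneous 1 ∧ (∀ x y : C4, ∀ t : ℂ,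
      eval (x + t • y) S = eval x S + t * eval y S) ∧
      ∀ k, eval (M k) S = (1 : Matrix (Fin 4) (Fin 4) ℂ) k j := by
  refine ⟨∑ c, C (M⁻¹ c j) * X c, ?_, ?_, ?_⟩
  · refine IsHomogeneous.sum _ _ _ fun c _ => ?_
    simpa using (isHomogeneous_C (Fin 4) (M⁻¹ c j)).mul (isHomogeneous_X ℂ c)
  · intro x y t
    simp [Fin.sum_univ_four]
    ring
  · intro k
    rw [← Matrix.mul_nonsing_inv M (isUnit_iff_ne_zero.2 h), Matrix.mul_apply]
    simp [mul_comm]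

/-! ### The unexpected form -/

/-- The Hankel determinant. -/
def hankel (q : ℕ → R3) : R3 :=
  q 0 * q 2 * q 4 + q 1 * q 2 * q 3 + q 1 * q 2 * q 3 - q 2 * q 2 * q 2 - q 0 * q 3 * q 3
    - q 1 * q 1 * q 4

theorem hankel_homogeneous {q : ℕ → R3} (h : ∀ j, (q j).IsHomogeneous 4) :
    (hankel q).IsHomogeneous 12 := by
  have h3 : ∀ i j k, (q i * q j * q k).IsHomogeneous 12 :=
    fun i j k => ((h i).mul (h j)).mul (h k)
  exact (((((h3 _ _ _).add (h3 _ _ _)).add (h3 _ _ _)).sub (h3 _ _ _)).sub (h3 _ _ _)).sub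
    (h3 _ _ _)

theorem hankel_mem_cube {q : ℕ → R3} {I : Ideal R3} (h : ∀ j, q j ∈ I) : hankel q ∈ I ^ 3 := by
  have h3 : ∀ i j k, q i * q j * q k ∈ I ^ 3 := by
    intro i j k
    rw [pow_succ, pow_two]
    exact Ideal.mul_mem_mul (Ideal.mul_mem_mul (h i) (h j)) (h k)
  exact Ideal.sub_mem _ (Ideal.sub_mem _ (Ideal.sub_mem _ (Ideal.add_mem _ (Ideal.add_mem _
    (h3 _ _ _) (h3 _ _ _)) (h3 _ _ _)) (h3 _ _ _)) (h3 _ _ _)) (h3 _ _ _)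

theorem hankel_mem_sq {q : ℕ → R3} {I : Ideal R3} {S T : R3}
    (h : ∀ j ≤ 4, q j - S ^ (4 - j) * T ^ j ∈ I) : hankel q ∈ I ^ 2 := by
  have h2 : ∀ {e f : R3} (c : R3), e ∈ I → f ∈ I → c * (e * f) ∈ I ^ 2 := by
    intro e f c he hf
    rw [pow_two]
    exact Ideal.mul_mem_left _ _ (Ideal.mul_mem_mul he hf)
  obtain ⟨e0, h0⟩ : ∃ e, e = q 0 - S ^ 4 := ⟨_, rfl⟩
  obtain ⟨e1, h1⟩ : ∃ e, e = q 1 - S ^ 3 * T := ⟨_, rfl⟩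
  obtain ⟨e2, h2'⟩ : ∃ e, e = q 2 - S ^ 2 * T ^ 2 := ⟨_, rfl⟩
  obtain ⟨e3, h3⟩ : ∃ e, e = q 3 - S * T ^ 3 := ⟨_, rfl⟩
  obtain ⟨e4, h4⟩ : ∃ e, e = q 4 - T ^ 4 := ⟨_, rfl⟩
  have m0 : e0 ∈ I := by simpa [h0] using h 0 (by norm_num)
  have m1 : e1 ∈ I := by simpa [h1] using h 1 (by norm_num)
  have m2 : e2 ∈ I := by simpa [h2'] using h 2 (by norm_num)
  have m3 : e3 ∈ I := by simpa [h3] using h 3 (by norm_num)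
  have m4 : e4 ∈ I := by simpa [h4] using h 4 (by norm_num)
  have key : hankel q =
      (S ^ 4) * (e2 * e4) + (S ^ 2 * T ^ 2 + e2) * (e0 * e4) + T ^ 4 * (e0 * e2)
      + 2 * S ^ 3 * T * (e2 * e3) + (2 * S ^ 2 * T ^ 2 + 2 * e2) * (e1 * e3)
      + 2 * S * T ^ 3 * (e1 * e2) + (-3 * S ^ 2 * T ^ 2 - e2) * (e2 * e2)
      + (-S ^ 4 - e0) * (e3 * e3) + (-2 * S * T ^ 3) * (e0 * e3)
      + (-T ^ 4 - e4) * (e1 * e1) + (-2 * S ^ 3 * T) * (e1 * e4) := by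
    subst h0 h1 h2' h3 h4
    unfold hankel
    ring
  rw [key]
  refine Ideal.add_mem _ (Ideal.add_mem _ (Ideal.add_mem _ (Ideal.add_mem _ (Ideal.add_mem _
    (Ideal.add_mem _ (Ideal.add_mem _ (Ideal.add_mem _ (Ideal.add_mem _ (Ideal.add_mem _
    ?_ ?_) ?_) ?_) ?_) ?_) ?_) ?_) ?_) ?_) ?_ <;> apply h2 <;> assumption

theorem hankel_grad {q : ℕ → R3} {a : C4} (h0 : eval a (q 0) = 1) (h1 : eval a (q 1) = 0)
    (h2 : eval a (q 2) = 0) (h3 : eval a (q 3) = 0) (h4 : eval a (q 4) = 0)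
    (hF : hankel q = 0) (k l : Fin 4) :
    eval a (pderiv k (q 2)) * eval a (pderiv l (q 4)) +
      eval a (pderiv l (q 2)) * eval a (pderiv k (q 4)) =
    2 * (eval a (pderiv k (q 3)) * eval a (pderiv l (q 3))) := by
  have h := congrArg (fun F => eval a (pderiv k (pderiv l F))) hF
  simp only [hankel, map_sub, map_add, Derivation.leibniz, smul_eq_mul, map_mul, h0, h1, h2, h3,
    h4, map_zero] at h
  linear_combination h

/-! ### The main argument -/

theorem length_kmons4 : (kmons 4).length = 35 := by decide +kernel

theorem length_kmons12 : (kmons 12).length = 455 := by decide +kernel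

theorem mem_kS4 : ∀ i : Fin 7, ∀ l : Fin 5, ((i, l.1, 0, 0, 0, 0) : Spec) ∈ kS4 := by
  decide +kernel

theorem kS5_cases : ∀ s ∈ kS5, (s.1 ≠ 6 ∧ s.2.1 < 5 ∧ s.2.2 = (0, 0, 0, 0)) ∨
    s ∈ ([(6, 1, 0, 0, 0, 0), (6, 0, 1, 0, 0, 0), (6, 0, 0, 1, 0, 0), (6, 0, 0, 0, 1, 0),
      (6, 0, 0, 0, 0, 1)] : List Spec) := by
  decide +kernel

theorem kS12_cases : ∀ s ∈ kS12, s = (6, 0, 0, 0, 2, 0) ∨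
    s.2.2.1 + s.2.2.2.1 + s.2.2.2.2.1 + s.2.2.2.2.2 <
      (![3, 3, 3, 3, 3, 3, 2] : Fin 7 → ℕ) s.1 := by
  decide +kernel

/-- The seven lines. -/
def lineOf (v : Fin 7 → Fin 2 → C4) (i : Fin 7) : Submodule ℂ C4 :=
  Submodule.span ℂ {v i 0, v i 1}

theorem exists_quartics {v : Fin 7 → Fin 2 → C4} (h4 : (Mat 4 kS4 v).det ≠ 0) :
    ∃ q : ℕ → R3, (∀ j, (q j).IsHomogeneous 4) ∧
      (∀ j, ∀ i : Fin 7, i ≠ 6 → ∀ l : Fin 5, eval (v i 0 + (l.1 : ℂ) • v i 1) (q j) = 0) ∧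
      ∀ j, ∀ l : Fin 5, eval (v 6 0 + (l.1 : ℂ) • v 6 1) (q j) = (l.1 : ℂ) ^ j := by
  have h : ∀ j : ℕ, ∃ F : R3, F.IsHomogeneous 4 ∧
      ∀ s ∈ kS4, lcond v s F = (fun s : Spec => if s.1 = 6 then (s.2.1 : ℂ) ^ j else 0) s :=
    fun j => exists_cond (by rw [length_kmons4]; rfl) h4 _
  choose q hq hs using h
  refine ⟨q, hq, ?_, ?_⟩
  · intro j i hi l
    rw [← lcond_zero, hs j _ (mem_kS4 i l)]
    simp [hi]
  · intro j l
    rw [← lcond_zero, hs j _ (mem_kS4 6 l)]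
    simp

theorem quartic_eq_zero {v : Fin 7 → Fin 2 → C4} (h5 : (Mat 4 kS5 v).det ≠ 0) {Q : R3}
    (hQ : Q.IsHomogeneous 4)
    (h : ∀ i : Fin 7, i ≠ 6 → ∀ l : Fin 5, eval (v i 0 + (l.1 : ℂ) • v i 1) Q = 0)
    (h1 : eval (v 6 0 + v 6 1) Q = 0) (hg : ∀ k, eval (v 6 0) (pderiv k Q) = 0) : Q = 0 := by
  refine eq_zero_of_cond (S := kS5) (by rw [length_kmons4]; rfl) h5 hQ ?_
  intro s hs
  obtain ⟨g0, g1, g2, g3⟩ := lcond_grad v 6 Q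
  have hc := kS5_cases s hs
  simp only [List.mem_cons, List.not_mem_nil, or_false] at hc
  rcases hc with ⟨a1, a2, a3⟩ | rfl | rfl | rfl | rfl | rfl
  · obtain ⟨i, l, t⟩ := s
    simp only at a1 a2 a3
    subst a3
    rw [lcond_zero]
    exact h i a1 ⟨l, a2⟩
  · rw [lcond_zero]
    simpa using h1
  · rw [g0, hg]
  · rw [g1, hg]
  · rw [g2, hg]
  · rw [g3, hg]

theorem hankel_ne_zero {v : Fin 7 → Fin 2 → C4} (h5 : (Mat 4 kS5 v).det ≠ 0) {q : ℕ → R3}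
    (hq : ∀ j, (q j).IsHomogeneous 4)
    (h : ∀ j, ∀ i : Fin 7, i ≠ 6 → ∀ l : Fin 5, eval (v i 0 + (l.1 : ℂ) • v i 1) (q j) = 0)
    (hv : ∀ j, ∀ l : Fin 5, eval (v 6 0 + (l.1 : ℂ) • v 6 1) (q j) = (l.1 : ℂ) ^ j) :
    hankel q ≠ 0 := by
  intro hF
  have hv0 : ∀ j, eval (v 6 0) (q j) = 0 ^ j := fun j => by simpa using hv j 0
  have hv1 : ∀ j, eval (v 6 0 + v 6 1) (q j) = 1 := fun j => by simpa using hv j 1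
  have hv2 : ∀ j, eval (v 6 0 + (2 : ℂ) • v 6 1) (q j) = 2 ^ j := fun j => by simpa using hv j 2
  have hv3 : ∀ j, eval (v 6 0 + (3 : ℂ) • v 6 1) (q j) = 3 ^ j := fun j => by simpa using hv j 3
  have G := hankel_grad (q := q) (a := v 6 0) (by simp [hv0]) (by simp [hv0]) (by simp [hv0])
    (by simp [hv0]) (by simp [hv0]) hF
  have comb : ∀ x y z : ℂ, x + y + z = 0 →
      (∀ k, x * eval (v 6 0) (pderiv k (q 2)) + y * eval (v 6 0) (pderiv k (q 3)) +
        z * eval (v 6 0) (pderiv k (q 4)) = 0) →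
      C x * q 2 + C y * q 3 + C z * q 4 = 0 := by
    intro x y z hxyz hg
    refine quartic_eq_zero h5 ?_ ?_ ?_ ?_
    · have hC : ∀ (x : ℂ) j, (C x * q j).IsHomogeneous 4 := fun x j => by
        simpa using (isHomogeneous_C (Fin 4) x).mul (hq j)
      exact ((hC _ _).add (hC _ _)).add (hC _ _)
    · intro i hi l
      simp only [map_add, map_mul, eval_C, h _ i hi l]
      ring
    · simp only [map_add, map_mul, eval_C, hv1]
      linear_combination hxyz
    · intro k
      simp only [map_add, Derivation.leibniz, pderiv_C, smul_eq_mul, map_mul, eval_C,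
        mul_zero, add_zero]
      exact hg k
  by_cases hz : ∀ k, eval (v 6 0) (pderiv k (q 2)) = 0
  · have h3 : ∀ k, eval (v 6 0) (pderiv k (q 3)) = 0 := by
      intro k
      have := G k k
      rw [hz] at this
      have h6 : eval (v 6 0) (pderiv k (q 3)) * eval (v 6 0) (pderiv k (q 3)) = 0 := by
        linear_combination -this / 2
      exact mul_self_eq_zero.1 h6
    have h7 := comb 1 (-1) 0 (by norm_num) (fun k => by rw [hz, h3]; ring)
    have h8 := congrArg (eval (v 6 0 + (2 : ℂ) • v 6 1)) h7
    simp only [map_add, map_mul, eval_C, hv2, map_zero] at h8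
    norm_num at h8
  · push Not at hz
    obtain ⟨k, hk⟩ := hz
    obtain ⟨κ, hκ⟩ : ∃ κ, eval (v 6 0) (pderiv k (q 3)) = κ * eval (v 6 0) (pderiv k (q 2)) :=
      ⟨eval (v 6 0) (pderiv k (q 3)) / eval (v 6 0) (pderiv k (q 2)), by field_simp⟩
    have h4k : eval (v 6 0) (pderiv k (q 4)) = κ ^ 2 * eval (v 6 0) (pderiv k (q 2)) := by
      have := G k k
      rw [hκ] at this
      apply mul_left_cancel₀ hk
      linear_combination this / 2
    have h4l : ∀ l, eval (v 6 0) (pderiv l (q 4)) =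
        2 * κ * eval (v 6 0) (pderiv l (q 3)) - κ ^ 2 * eval (v 6 0) (pderiv l (q 2)) := by
      intro l
      have := G k l
      rw [hκ, h4k] at this
      apply mul_left_cancel₀ hk
      linear_combination this
    have h3l : ∀ l, eval (v 6 0) (pderiv l (q 3)) = κ * eval (v 6 0) (pderiv l (q 2)) := by
      intro l
      have := G l l
      rw [h4l] at this
      have h6 : (eval (v 6 0) (pderiv l (q 3)) - κ * eval (v 6 0) (pderiv l (q 2))) *
          (eval (v 6 0) (pderiv l (q 3)) - κ * eval (v 6 0) (pderiv l (q 2))) = 0 := by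
        linear_combination -this / 2
      exact sub_eq_zero.1 (mul_self_eq_zero.1 h6)
    have h7 := comb κ (-(1 + κ)) 1 (by ring) (fun l => by rw [h4l, h3l]; ring)
    have h8 := congrArg (eval (v 6 0 + (2 : ℂ) • v 6 1)) h7
    have h9 := congrArg (eval (v 6 0 + (3 : ℂ) • v 6 1)) h7
    simp only [map_add, map_mul, eval_C, hv2, hv3, map_zero] at h8 h9
    have h10 : κ = 2 := by linear_combination -h8 / 4
    rw [h10] at h9
    norm_num at h9

theorem exists_form {v : Fin 7 → Fin 2 → C4} (h4 : (Mat 4 kS4 v).det ≠ 0)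
    (h5 : (Mat 4 kS5 v).det ≠ 0) (hM : (M4 v 6 0).det ≠ 0) :
    ∃ F ∈ linSys 12 (lineOf v) ![3, 3, 3, 3, 3, 3, 2], F ≠ 0 := by
  obtain ⟨q, hq, h, hv⟩ := exists_quartics h4
  refine ⟨hankel q, ?_, hankel_ne_zero h5 hq h hv⟩
  have hI : ∀ i : Fin 7, i ≠ 6 → hankel q ∈ lineIdeal (lineOf v i) ^ 3 := fun i hi =>
    hankel_mem_cube fun j => mem_lineIdeal (hq j) (h j i hi)
  have hI6 : hankel q ∈ lineIdeal (lineOf v 6) ^ 2 := by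
    obtain ⟨S, hS, hSl, hSe⟩ := dual_form hM 0
    obtain ⟨T, hT, hTl, hTe⟩ := dual_form hM 1
    have S0 : eval (v 6 0) S = 1 := (hSe 0).trans (by simp)
    have S1 : eval (v 6 1) S = 0 := (hSe 1).trans (by simp)
    have T0 : eval (v 6 0) T = 0 := (hTe 0).trans (by simp)
    have T1 : eval (v 6 1) T = 1 := (hTe 1).trans (by simp)
    refine hankel_mem_sq (S := S) (T := T) fun j hj => mem_lineIdeal ?_ fun l => ?_
    · refine (hq j).sub ?_
      have := (hS.pow (4 - j)).mul (hT.pow j)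
      rwa [show 1 * (4 - j) + 1 * j = 4 by omega] at this
    · rw [map_sub, hv, map_mul, map_pow, map_pow, hSl, hTl, S0, S1, T0, T1]
      simp
  refine Submodule.mem_inf.2 ⟨hankel_homogeneous hq, ?_⟩
  rw [Submodule.mem_iInf]
  intro i
  rw [Submodule.restrictScalars_mem]
  by_cases hi : i = 6
  · subst hi
    exact hI6
  · have h3 : (![3, 3, 3, 3, 3, 3, 2] : Fin 7 → ℕ) i = 3 := by
      revert hi
      revert i
      decide
    rw [h3]
    exact hI i hi

theorem form_eq_zero {v : Fin 7 → Fin 2 → C4} (h12 : (Mat 12 kS12 v).det ≠ 0) {F : R3}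
    (hF : F ∈ linSys 12 (lineOf v) ![3, 3, 3, 3, 3, 3, 2])
    (hx : lcond v (6, 0, 0, 0, 2, 0) F = 0) : F = 0 := by
  obtain ⟨h1, h2⟩ := Submodule.mem_inf.1 hF
  rw [Submodule.mem_iInf] at h2
  refine eq_zero_of_cond (S := kS12) (by rw [length_kmons12]; decide +kernel) h12 h1 ?_
  intro s hs
  rcases kS12_cases s hs with rfl | hs
  · exact hx
  · exact lcond_eq_zero v s (h2 s.1) hs

theorem finrank_eq {v : Fin 7 → Fin 2 → C4} (h4 : (Mat 4 kS4 v).det ≠ 0)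
    (h5 : (Mat 4 kS5 v).det ≠ 0) (h12 : (Mat 12 kS12 v).det ≠ 0) (hM : (M4 v 6 0).det ≠ 0) :
    Module.finrank ℂ ↥(linSys 12 (lineOf v) ![3, 3, 3, 3, 3, 3, 2]) = 1 := by
  obtain ⟨F, hF, hF0⟩ := exists_form h4 h5 hM
  have hφ : lcond v (6, 0, 0, 0, 2, 0) F ≠ 0 := fun h => hF0 (form_eq_zero h12 hF h)
  refine finrank_eq_one_iff'.2 ⟨⟨F, hF⟩, fun h => hF0 (congrArg Subtype.val h), ?_⟩
  rintro ⟨G, hG⟩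
  refine ⟨lcond v (6, 0, 0, 0, 2, 0) G / lcond v (6, 0, 0, 0, 2, 0) F, Subtype.ext ?_⟩
  refine sub_eq_zero.1 (form_eq_zero h12 (Submodule.sub_mem _ (Submodule.smul_mem _ _ hF) hG) ?_)
  change lcond v (6, 0, 0, 0, 2, 0) (_ • F - G) = 0
  rw [map_sub, map_smul, smul_eq_mul, div_mul_cancel₀ _ hφ, sub_self]

instance fact_prime : Fact (Nat.Prime 23) := ⟨by norm_num⟩

theorem kcheck4 : kcheck 23 524288 4 35 kV kS4 = true := by decide +kernel

theorem kcheck5 : kcheck 23 524288 4 35 kV kS5 = true := by decide +kernel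

theorem kcheck12 : kcheck 23 524288 12 455 kV kS12 = true := by decide +kernel

/-- The system `𝓛_{12}(3,3,3,3,3,3,2)` for seven general lines has dimension
exactly 1, yet `binom(15,3) = 455 < 457 = 6·70 + 37`, so it has negative
virtual dimension and is special (unexpected). -/
theorem stmt_8 :
    GeneralLines 7 (fun L =>
      Module.finrank ℂ ↥(linSys 12 L ![3, 3, 3, 3, 3, 3, 2]) = 1) ∧
    Nat.choose 15 3 < 6 * 70 + 37 := by
  refine ⟨?_, by decide⟩
  obtain ⟨P1, hP1, h1⟩ := exists_poly kcheck4 length_kmons4 rfl (by norm_num) (by norm_num)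
  obtain ⟨P2, hP2, h2⟩ := exists_poly kcheck5 length_kmons4 rfl (by norm_num) (by norm_num)
  obtain ⟨P3, hP3, h3⟩ := exists_poly kcheck12 length_kmons12 (by decide +kernel) (by norm_num)
    (by norm_num)
  obtain ⟨P4, hP4, h4⟩ := exists_M4_poly
  refine ⟨P1 * P2 * P3 * P4, mul_ne_zero (mul_ne_zero (mul_ne_zero hP1 hP2) hP3) hP4, ?_⟩
  intro v hv
  simp only [map_mul, mul_ne_zero_iff] at hv
  obtain ⟨⟨⟨hv1, hv2⟩, hv3⟩, hv4⟩ := hv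
  have hM := h4 v hv4
  refine ⟨?_, ?_, finrank_eq (h1 v hv1) (h2 v hv2) (h3 v hv3) (hM 6 0 (by decide))⟩
  · intro i
    obtain ⟨j, hj⟩ : ∃ j, i ≠ j := by
      revert i
      decide
    rw [LinearIndependent.pair_iff]
    intro s t hst
    have := linInd_of_det (hM i j hj) s t 0 0 (by simpa using hst)
    exact ⟨this.1, this.2.1⟩
  · intro i j hij
    rw [Submodule.eq_bot_iff]
    intro x hx
    obtain ⟨hx1, hx2⟩ := Submodule.mem_inf.1 hx
    obtain ⟨s, t, rfl⟩ := Submodule.mem_span_pair.1 hx1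
    obtain ⟨s', t', h'⟩ := Submodule.mem_span_pair.1 hx2
    have := linInd_of_det (hM i j hij) s t (-s') (-t') (by
      rw [← h', neg_smul, neg_smul]
      abel)
    rw [this.1, this.2.1]
    simp
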